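/- Let n ≥ 1 be an integer, let γ ∈ ℝ with |γ| < 1, and let m₁, m₂ ∈ ℝ. Let C(γ) be the (n+1)×(n+1) matrix with entries C(γ)_{ij} = γ^{|i−j|}/(1 − γ²), and let M(m₁, m₂) be the (n+1)×(n+1) symmetric tridiagonal matrix with M₀₀ = M_{nn} = 1, M_{ii} = 1 + m₂ for 0 < i < n, first sub/super-diagonal entries −m₁, and all other entries 0. Then tr( C(γ) · M(m₁, m₂) ) = ( 2 + (1 + m₂)(n − 1) − 2 n γ m₁ ) / (1 − γ²). -/

import Mathlib

open Matrix

lemma aux_off (n : ℕ) (c : ℝ) :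
    ∑ i : Fin (n + 1), ∑ j : Fin (n + 1), (if (i : ℕ) + 1 = (j : ℕ) then c else 0) = n * c := by
  have h : ∀ i : Fin (n + 1), ∑ j : Fin (n + 1), (if (i : ℕ) + 1 = (j : ℕ) then c else 0)
      = if (i : ℕ) < n then c else 0 := by
    intro i
    rw [Fin.sum_univ_eq_sum_range (fun j => if (i : ℕ) + 1 = j then c else 0) (n + 1),
      Finset.sum_ite_eq]
    simp
  rw [Finset.sum_congr rfl (fun i _ => h i), Fin.sum_univ_castSucc]
  simp

lemma aux_diag (n : ℕ) (hn : 1 ≤ n) (b : ℝ) :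
    ∑ i : Fin (n + 1), (if (i : ℕ) = 0 ∨ (i : ℕ) = n then 1 else b) = 2 + b * ((n : ℝ) - 1) := by
  obtain ⟨m, rfl⟩ : ∃ m, n = m + 1 := ⟨n - 1, by omega⟩
  rw [Fin.sum_univ_castSucc, Fin.sum_univ_succ]
  have h : ∀ i : Fin m, (if ((i.succ.castSucc : Fin (m + 1 + 1)) : ℕ) = 0 ∨
      ((i.succ.castSucc : Fin (m + 1 + 1)) : ℕ) = m + 1 then 1 else b) = b := by
    intro i
    have := i.2
    rw [if_neg]
    simp
    omega
  rw [Finset.sum_congr rfl (fun i _ => h i)]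
  simp
  ring

/-- Trace term of the homoscedastic variational lower bound: for `|γ| < 1`, with
`C(γ)ᵢⱼ = γ^{|i−j|}/(1 − γ²)` (the inverse of the tridiagonal matrix `Γ(γ)`) and `M(m₁, m₂)`
the symmetric tridiagonal matrix with `M₀₀ = Mₙₙ = 1`, `Mᵢᵢ = 1 + m₂` for `0 < i < n`, first
sub/super-diagonal entries `−m₁` and `0` elsewhere, one has
`tr(C(γ) · M(m₁, m₂)) = (2 + (1 + m₂)(n − 1) − 2nγm₁)/(1 − γ²)`. -/
theorem trace_ar1Covariance_mul_meanPrecision (n : ℕ) (hn : 1 ≤ n)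
    (γ : ℝ) (hγ : |γ| < 1) (m₁ m₂ : ℝ) :
    Matrix.trace
      ((Matrix.of fun i j : Fin (n + 1) =>
          γ ^ (((i : ℤ) - (j : ℤ)).natAbs) / (1 - γ ^ 2)) *
        (Matrix.of fun i j : Fin (n + 1) =>
          if i = j then (if (i : ℕ) = 0 ∨ (i : ℕ) = n then 1 else 1 + m₂)
          else if (i : ℕ) + 1 = (j : ℕ) ∨ (j : ℕ) + 1 = (i : ℕ) then -m₁ else 0))
      = (2 + (1 + m₂) * ((n : ℝ) - 1) - 2 * (n : ℝ) * γ * m₁) / (1 - γ ^ 2) := by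
  simp only [Matrix.trace, Matrix.diag_apply, Matrix.mul_apply, Matrix.of_apply]
  have key : ∀ i j : Fin (n + 1),
      γ ^ (((i : ℤ) - (j : ℤ)).natAbs) / (1 - γ ^ 2) *
        (if j = i then (if (j : ℕ) = 0 ∨ (j : ℕ) = n then 1 else 1 + m₂)
          else if (j : ℕ) + 1 = (i : ℕ) ∨ (i : ℕ) + 1 = (j : ℕ) then -m₁ else 0)
      = ((if j = i then (if (j : ℕ) = 0 ∨ (j : ℕ) = n then 1 else 1 + m₂) else 0)
        + (if (i : ℕ) + 1 = (j : ℕ) then -(γ * m₁) else 0)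
        + (if (j : ℕ) + 1 = (i : ℕ) then -(γ * m₁) else 0)) / (1 - γ ^ 2) := by
    intro i j
    by_cases h : j = i
    · subst h
      simp
      split_ifs <;> ring
    · by_cases h1 : (i : ℕ) + 1 = (j : ℕ)
      · have h2 : ¬ ((j : ℕ) + 1 = (i : ℕ)) := by omega
        have h3 : ((i : ℤ) - (j : ℤ)).natAbs = 1 := by omega
        rw [if_neg h, if_neg h, if_pos (Or.inr h1), if_pos h1, if_neg h2, h3]
        ring
      · by_cases h2 : (j : ℕ) + 1 = (i : ℕ)
        · have h3 : ((i : ℤ) - (j : ℤ)).natAbs = 1 := by omega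
          rw [if_neg h, if_neg h, if_pos (Or.inl h2), if_neg h1, if_pos h2, h3]
          ring
        · simp [h, h1, h2]
  simp only [key]
  simp only [← Finset.sum_div, Finset.sum_add_distrib]
  rw [aux_off]
  rw [Finset.sum_comm (f := fun i j : Fin (n + 1) =>
    if (j : ℕ) + 1 = (i : ℕ) then -(γ * m₁) else 0), aux_off]
  simp only [Finset.sum_ite_eq', Finset.mem_univ, if_true]
  rw [aux_diag n hn]
  ring
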